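/- There exists a graph G on 7 vertices with χ_g(G) = 4 and χ_cg(G) = 5; in particular the connected game chromatic number can strictly exceed the game chromatic number. -/

import Mathlib

/-- Colour `c` is legal at vertex `v` in the vertex colouring game: `v` is uncoloured
and no neighbour of `v` has colour `c`. -/
def VLegal {V : Type} (G : SimpleGraph V) {k : ℕ} (col : V → Option (Fin k))
    (v : V) (c : Fin k) : Prop :=
  col v = none ∧ ∀ u, G.Adj u v → col u ≠ some c

/-- Some uncoloured vertex has all `k` colours among its coloured neighbours, so it is
impossible to colour: Breaker's winning condition. -/
def VStuck {V : Type} (G : SimpleGraph V) {k : ℕ} (col : V → Option (Fin k)) : Prop :=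
  ∃ v, col v = none ∧ ∀ c : Fin k, ∃ u, G.Adj u v ∧ col u = some c

/-- `VMakerWins G k col t` : Maker has a winning strategy in the vertex colouring game
on `G` with `k` colours from position `col` (`t = true`: Maker's turn, `t = false`:
Breaker's turn).  Maker wins when the whole graph gets coloured, no vertex ever having
become impossible to colour. -/
inductive VMakerWins {V : Type} [DecidableEq V] (G : SimpleGraph V) (k : ℕ) :
    (V → Option (Fin k)) → Bool → Prop
  | done (col : V → Option (Fin k)) (t : Bool) (h : ∀ v, col v ≠ none) :
      VMakerWins G k col t
  | maker (col : V → Option (Fin k)) (hns : ¬ VStuck G col) (v : V) (c : Fin k)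
      (hc : VLegal G col v c)
      (ih : VMakerWins G k (Function.update col v (some c)) false) :
      VMakerWins G k col true
  | breaker (col : V → Option (Fin k)) (hns : ¬ VStuck G col) (hne : ∃ v, col v = none)
      (ih : ∀ v c, VLegal G col v c →
        VMakerWins G k (Function.update col v (some c)) true) :
      VMakerWins G k col false

/-- Colour `c` is legal at `v` in the connected vertex colouring game: legal as in the
ordinary game, and additionally `v` must be adjacent to an already-coloured vertex
unless no vertex is coloured yet. -/
def CLegal {V : Type} (G : SimpleGraph V) {k : ℕ} (col : V → Option (Fin k))
    (v : V) (c : Fin k) : Prop :=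
  VLegal G col v c ∧ ((∀ u, col u = none) ∨ ∃ u, G.Adj u v ∧ col u ≠ none)

/-- `CMakerWins G k col t` : Maker has a winning strategy in the connected vertex
colouring game on `G` with `k` colours from position `col`. -/
inductive CMakerWins {V : Type} [DecidableEq V] (G : SimpleGraph V) (k : ℕ) :
    (V → Option (Fin k)) → Bool → Prop
  | done (col : V → Option (Fin k)) (t : Bool) (h : ∀ v, col v ≠ none) :
      CMakerWins G k col t
  | maker (col : V → Option (Fin k)) (hns : ¬ VStuck G col) (v : V) (c : Fin k)
      (hc : CLegal G col v c)
      (ih : CMakerWins G k (Function.update col v (some c)) false) :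
      CMakerWins G k col true
  | breaker (col : V → Option (Fin k)) (hns : ¬ VStuck G col)
      (hmv : ∃ v c, CLegal G col v c)
      (ih : ∀ v c, CLegal G col v c →
        CMakerWins G k (Function.update col v (some c)) true) :
      CMakerWins G k col false

/-- The game chromatic number of `G`: the least `k` for which Maker has a winning
strategy in the vertex colouring game on `G` with `k` colours. -/
noncomputable def gameChromaticNumber {V : Type} [DecidableEq V] (G : SimpleGraph V) : ℕ :=
  sInf {k : ℕ | VMakerWins G k (fun _ => none) true}

/-- The connected game chromatic number of `G`: the least `k` for which Maker has a
winning strategy in the connected vertex colouring game on `G` with `k` colours. -/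
noncomputable def connGameChromaticNumber {V : Type} [DecidableEq V] (G : SimpleGraph V) : ℕ :=
  sInf {k : ℕ | CMakerWins G k (fun _ => none) true}

/-! ### The witness graph, and a verified solver for the two games -/

/-- Boolean adjacency of the witness graph (vertex `i` of the paper is `i - 1` here),
read off from a `7 × 7` bit matrix. -/
def wAdj (u v : Fin 7) : Bool :=
  Nat.beq (Nat.land (Nat.shiftRight 244352269433082 (Nat.add (Nat.mul 7 u.val) v.val)) 1) 1

/-- The witness graph. -/
def wG : SimpleGraph (Fin 7) where
  Adj u v := wAdj u v = true
  symm := ⟨by decide +kernel⟩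
  loopless := ⟨by decide +kernel⟩

instance : DecidableRel wG.Adj := fun u v => inferInstanceAs (Decidable (wAdj u v = true))

/-- A position is stored as the list of moves made so far; this is the colouring it denotes. -/
def toCol {k : ℕ} : List (Fin 7 × Fin k) → Fin 7 → Option (Fin k)
  | [] => fun _ => none
  | m :: s => Function.update (toCol s) m.1 (some m.2)

/-- `v` is uncoloured. -/
def isFree {k : ℕ} (s : List (Fin 7 × Fin k)) (v : Fin 7) : Bool :=
  s.all fun m => !(Nat.beq m.1.val v.val)

/-- Some neighbour of `v` has colour `c`. -/
def sees {k : ℕ} (s : List (Fin 7 × Fin k)) (v : Fin 7) (c : Fin k) : Bool :=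
  s.any fun m => Nat.beq m.2.val c.val && wAdj m.1 v

/-- Some neighbour of `v` is coloured, or nothing is coloured at all. -/
def touches {k : ℕ} (s : List (Fin 7 × Fin k)) (v : Fin 7) : Bool :=
  s.isEmpty || s.any fun m => wAdj m.1 v

def legalB {k : ℕ} (conn : Bool) (s : List (Fin 7 × Fin k)) (m : Fin 7 × Fin k) : Bool :=
  isFree s m.1 && (!(sees s m.1 m.2) && (!conn || touches s m.1))

def stuckB {k : ℕ} (s : List (Fin 7 × Fin k)) : Bool :=
  (List.finRange 7).any fun v => isFree s v && (List.finRange k).all fun c => sees s v c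

/-- Every uncoloured vertex has more available colours than uncoloured neighbours. -/
def safeB {k : ℕ} (s : List (Fin 7 × Fin k)) : Bool :=
  (List.finRange 7).all fun v => !(isFree s v) ||
    Nat.ble (Nat.succ ((List.finRange 7).countP fun u => wAdj u v && isFree s u))
      ((List.finRange k).countP fun c => !(sees s v c))

/-- Breaker wins, by bounded search: Maker may play the moves in `ms`, and Breaker restricts
himself to the moves in `bs`. -/
def bw {k : ℕ} (conn : Bool) (ms bs : List (Fin 7 × Fin k)) :
    ℕ → Bool → List (Fin 7 × Fin k) → Bool
  | 0, _, s => stuckB s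
  | n + 1, true, s => stuckB s || ((List.finRange 7).any (isFree s) &&
      ms.all fun m => !(legalB conn s m) || bw conn ms bs n false (m :: s))
  | n + 1, false, s => stuckB s ||
      bs.any fun m => legalB conn s m && bw conn ms bs n true (m :: s)

/-- Maker wins, by bounded search. -/
def mw {k : ℕ} (conn : Bool) (ms : List (Fin 7 × Fin k)) :
    ℕ → Bool → List (Fin 7 × Fin k) → Bool
  | 0, _, s => safeB s
  | n + 1, true, s => safeB s || (!(stuckB s) &&
      ms.any fun m => legalB conn s m && mw conn ms n false (m :: s))
  | n + 1, false, s => safeB s || (!(stuckB s) && (ms.any (legalB conn s) &&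
      ms.all fun m => !(legalB conn s m) || mw conn ms n true (m :: s)))

/-- All moves. -/
def allMoves (k : ℕ) : List (Fin 7 × Fin k) :=
  ((List.finRange 7).product (List.finRange k)).reverse

theorem mem_allMoves {k : ℕ} (m : Fin 7 × Fin k) : m ∈ allMoves k := by
  obtain ⟨a, b⟩ := m
  simp [allMoves, List.product]

/-! ### Positions that arise in play: distinct vertices -/

/-- No vertex is coloured twice. -/
def Good {k : ℕ} : List (Fin 7 × Fin k) → Prop
  | [] => True
  | m :: s => toCol s m.1 = none ∧ Good s

theorem isFree_iff {k : ℕ} (s : List (Fin 7 × Fin k)) (v : Fin 7) :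
    isFree s v = true ↔ toCol s v = none := by
  induction s with
  | nil => simp [isFree, toCol]
  | cons m s ih =>
    have : isFree (m :: s) v = (!(Nat.beq m.1.val v.val) && isFree s v) := by
      simp [isFree]
    rw [this]
    by_cases h : v = m.1
    · subst h
      simp [toCol]
    · have h' : ¬ (m.1.val = v.val) := fun e => h (Fin.ext e.symm)
      have hb : Nat.beq m.1.val v.val = false := by
        rw [← Bool.not_eq_true, Nat.beq_eq]; exact h'
      simp [toCol, Function.update_of_ne h, ih, hb]

theorem toCol_eq_some {k : ℕ} (s : List (Fin 7 × Fin k)) (hs : Good s) (u : Fin 7) (c : Fin k) :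
    toCol s u = some c ↔ (u, c) ∈ s := by
  induction s with
  | nil => simp [toCol]
  | cons m s ih =>
    obtain ⟨w, d⟩ := m
    obtain ⟨h1, h2⟩ := hs
    specialize ih h2
    by_cases h : u = w
    · subst h
      have : (u, c) ∉ s := by
        rw [← ih]; intro e; simp only at h1; rw [h1] at e; cases e
      simp [toCol, this, eq_comm]
    · simp [toCol, ih, h]

theorem sees_iff {k : ℕ} (s : List (Fin 7 × Fin k)) (hs : Good s) (v : Fin 7) (c : Fin k) :
    sees s v c = true ↔ ∃ u, wG.Adj u v ∧ toCol s u = some c := by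
  simp only [toCol_eq_some s hs, sees, List.any_eq_true, Bool.and_eq_true, Nat.beq_eq]
  constructor
  · rintro ⟨⟨u, d⟩, h, h1, h2⟩
    obtain rfl : d = c := Fin.ext h1
    exact ⟨u, h2, h⟩
  · rintro ⟨u, h, h2⟩
    exact ⟨(u, c), h2, rfl, h⟩

theorem touches_iff {k : ℕ} (s : List (Fin 7 × Fin k)) (hs : Good s) (v : Fin 7) :
    touches s v = true ↔ (∀ u, toCol s u = none) ∨ ∃ u, wG.Adj u v ∧ toCol s u ≠ none := by
  have h1 : s.isEmpty = true ↔ ∀ u, toCol s u = none := by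
    cases s with
    | nil => simp [toCol]
    | cons m s =>
      simp only [List.isEmpty_cons, Bool.false_eq_true, false_iff, not_forall]
      exact ⟨m.1, by simp [toCol]⟩
  have h2 : (s.any fun m => wAdj m.1 v) = true ↔ ∃ u, wG.Adj u v ∧ toCol s u ≠ none := by
    simp only [List.any_eq_true, Option.ne_none_iff_exists']
    constructor
    · rintro ⟨⟨u, d⟩, h, h1⟩
      exact ⟨u, h1, d, (toCol_eq_some s hs u d).2 h⟩
    · rintro ⟨u, h, d, h2⟩
      exact ⟨(u, d), (toCol_eq_some s hs u d).1 h2, h⟩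
  rw [touches, Bool.or_eq_true, h1, h2]

theorem legalB_false_iff {k : ℕ} (s : List (Fin 7 × Fin k)) (hs : Good s) (m : Fin 7 × Fin k) :
    legalB false s m = true ↔ VLegal wG (toCol s) m.1 m.2 := by
  simp only [legalB, VLegal, Bool.and_eq_true, isFree_iff, Bool.not_eq_true', Bool.not_false,
    Bool.true_or, and_true]
  rw [← Bool.not_eq_true, sees_iff s hs]
  simp

theorem legalB_true_iff {k : ℕ} (s : List (Fin 7 × Fin k)) (hs : Good s) (m : Fin 7 × Fin k) :
    legalB true s m = true ↔ CLegal wG (toCol s) m.1 m.2 := by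
  rw [CLegal, ← legalB_false_iff s hs, ← touches_iff s hs]
  simp [legalB, and_assoc]

theorem stuckB_iff {k : ℕ} (s : List (Fin 7 × Fin k)) (hs : Good s) :
    stuckB s = true ↔ VStuck wG (toCol s) := by
  simp [stuckB, VStuck, List.any_eq_true, List.all_eq_true, isFree_iff, sees_iff s hs]

theorem good_cons {k : ℕ} {conn : Bool} {s : List (Fin 7 × Fin k)} (hs : Good s)
    {m : Fin 7 × Fin k} (h : legalB conn s m = true) : Good (m :: s) := by
  refine ⟨?_, hs⟩
  rw [legalB, Bool.and_eq_true] at h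
  exact (isFree_iff s _).1 h.1

/-! ### Safe positions -/

/-- Every uncoloured vertex has more available colours than uncoloured neighbours. -/
def Safe {k : ℕ} (col : Fin 7 → Option (Fin k)) : Prop :=
  ∀ v, col v = none →
    (Finset.univ.filter fun u => wG.Adj u v ∧ col u = none).card <
      (Finset.univ.filter fun c : Fin k => ∀ u, wG.Adj u v → col u ≠ some c).card

open Classical in
theorem countP_finRange {n : ℕ} (p : Fin n → Bool) (q : Fin n → Prop) (h : ∀ i, p i = true ↔ q i) :
    (List.finRange n).countP p = (Finset.univ.filter q).card := by
  have : (Finset.univ.filter q) = Finset.univ.filter (fun i => p i = true) := by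
    ext i; simp [h]
  rw [this, List.countP_eq_length_filter, ← List.toFinset_finRange, ← List.toFinset_filter,
    List.toFinset_card_of_nodup ((List.nodup_finRange n).filter _)]

theorem safeB_safe {k : ℕ} (s : List (Fin 7 × Fin k)) (hs : Good s) (h : safeB s = true) :
    Safe (toCol s) := by
  classical
  intro v hv
  simp only [safeB, List.all_eq_true] at h
  have := h v (List.mem_finRange v)
  rw [(isFree_iff s v).2 hv, Bool.not_true, Bool.false_or, Nat.ble_eq, Nat.succ_le_iff] at this
  rw [countP_finRange _ (fun u => wG.Adj u v ∧ toCol s u = none),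
    countP_finRange _ (fun c : Fin k => ∀ u, wG.Adj u v → toCol s u ≠ some c)] at this
  · convert this
  · intro c
    rw [Bool.not_eq_true', ← Bool.not_eq_true, sees_iff s hs]
    simp
  · intro u
    rw [Bool.and_eq_true, isFree_iff]
    rfl

theorem Safe.exists_color {k : ℕ} {col : Fin 7 → Option (Fin k)} (h : Safe col) {v : Fin 7}
    (hv : col v = none) : ∃ c, VLegal wG col v c := by
  obtain ⟨c, hc⟩ := Finset.card_pos.1 (lt_of_le_of_lt (Nat.zero_le _) (h v hv))
  exact ⟨c, hv, (Finset.mem_filter.1 hc).2⟩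

theorem Safe.not_stuck {k : ℕ} {col : Fin 7 → Option (Fin k)} (h : Safe col) :
    ¬ VStuck wG col := by
  rintro ⟨v, hv, h2⟩
  obtain ⟨c, -, hc⟩ := h.exists_color hv
  obtain ⟨u, hu, e⟩ := h2 c
  exact hc u hu e

theorem Safe.update {k : ℕ} {col : Fin 7 → Option (Fin k)} (h : Safe col) {w : Fin 7} (d : Fin k)
    (hw : col w = none) : Safe (Function.update col w (some d)) := by
  classical
  intro v hv
  have hvw : v ≠ w := by
    rintro rfl; simp at hv
  rw [Function.update_of_ne hvw] at hv
  have h0 := h v hv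
  by_cases hadj : wG.Adj w v
  · set A := Finset.univ.filter fun u => wG.Adj u v ∧ col u = none with hA
    set C := Finset.univ.filter fun c : Fin k => ∀ u, wG.Adj u v → col u ≠ some c with hC
    have hwA : w ∈ A := by simp [hA, hadj, hw]
    have h1 : (Finset.univ.filter fun u => wG.Adj u v ∧
        Function.update col w (some d) u = none) ⊆ A.erase w := by
      intro u hu
      simp only [Finset.mem_filter, Finset.mem_univ, true_and] at hu
      by_cases e : u = w
      · subst e; simp at hu
      · rw [Function.update_of_ne e] at hu
        simp [hA, e, hu]
    have h2 : C.erase d ⊆ (Finset.univ.filter fun c : Fin k => ∀ u, wG.Adj u v →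
        Function.update col w (some d) u ≠ some c) := by
      intro c hc
      simp only [hC, Finset.mem_erase, Finset.mem_filter, Finset.mem_univ, true_and] at hc ⊢
      intro u hu
      by_cases e : u = w
      · subst e; simpa using fun e => hc.1 e.symm
      · rw [Function.update_of_ne e]; exact hc.2 u hu
    have h3 := Finset.card_le_card h1
    have h4 := Finset.card_le_card h2
    have h5 := Finset.card_erase_add_one hwA
    have h6 := Finset.pred_card_le_card_erase (s := C) (a := d)
    have h7 : A.card < C.card := by convert h0
    refine lt_of_le_of_lt (b := (A.erase w).card) ?_ (lt_of_lt_of_le (b := (C.erase d).card) ?_ ?_)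
    · convert h3
    · omega
    · convert h4
  · have key : ∀ u, wG.Adj u v → Function.update col w (some d) u = col u := by
      intro u hu
      refine Function.update_of_ne ?_ _ _
      rintro rfl; exact hadj hu
    have e1 : ∀ u, (wG.Adj u v ∧ Function.update col w (some d) u = none) ↔
        (wG.Adj u v ∧ col u = none) := fun u =>
      and_congr_right fun hu => by rw [key u hu]
    have e2 : ∀ c : Fin k, (∀ u, wG.Adj u v → Function.update col w (some d) u ≠ some c) ↔
        (∀ u, wG.Adj u v → col u ≠ some c) := fun c =>
      forall_congr' fun u => forall_congr' fun hu => by rw [key u hu]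
    simp only [e1, e2]
    convert h0

theorem free_card_update {k : ℕ} {col : Fin 7 → Option (Fin k)} {w : Fin 7} (d : Fin k)
    (hw : col w = none) :
    (Finset.univ.filter fun u => Function.update col w (some d) u = none).card <
      (Finset.univ.filter fun u => col u = none).card := by
  apply Finset.card_lt_card
  rw [Finset.ssubset_iff_of_subset]
  · exact ⟨w, by simp [hw], by simp⟩
  · intro u hu
    simp only [Finset.mem_filter, Finset.mem_univ, true_and] at hu ⊢
    by_cases e : u = w
    · subst e; exact hw
    · rwa [Function.update_of_ne e] at hu

theorem Safe.vwins {k : ℕ} (n : ℕ) : ∀ (col : Fin 7 → Option (Fin k)) (t : Bool), Safe col →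
    (Finset.univ.filter fun u => col u = none).card ≤ n → VMakerWins wG k col t := by
  induction n with
  | zero =>
    intro col t _ hn
    refine .done _ _ fun v hv => ?_
    have := Finset.card_eq_zero.1 (Nat.le_zero.1 hn)
    have hm : v ∈ Finset.univ.filter fun u => col u = none := by simp [hv]
    rw [this] at hm
    simp at hm
  | succ n ih =>
    intro col t h hn
    by_cases hd : ∀ v, col v ≠ none
    · exact .done _ _ hd
    push Not at hd
    have next : ∀ v c, VLegal wG col v c → ∀ t,
        VMakerWins wG k (Function.update col v (some c)) t := fun v c hc t =>
      ih _ t (h.update c hc.1) (by have := free_card_update c hc.1; omega)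
    cases t with
    | true =>
      obtain ⟨v, hv⟩ := hd
      obtain ⟨c, hc⟩ := h.exists_color hv
      exact .maker _ h.not_stuck v c hc (next v c hc _)
    | false => exact .breaker _ h.not_stuck hd fun v c hc => next v c hc _

/-- The witness graph is connected, in the form needed for the connected game. -/
theorem wG_cross : ∀ f : Fin 7 → Bool, (∃ v, f v = false) →
    (∀ v, f v = false) ∨ ∃ v, f v = false ∧ ∃ u, wAdj u v = true ∧ f u = true := by
  decide +kernel

theorem exists_touch {k : ℕ} (col : Fin 7 → Option (Fin k)) (h : ∃ v, col v = none) :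
    ∃ v, col v = none ∧ ((∀ u, col u = none) ∨ ∃ u, wG.Adj u v ∧ col u ≠ none) := by
  have := wG_cross (fun v => (col v).isSome) (by simpa using h)
  rcases this with h1 | ⟨v, h1, u, h2, h3⟩
  · obtain ⟨v, hv⟩ := h
    exact ⟨v, hv, Or.inl (by simpa using h1)⟩
  · exact ⟨v, by simpa using h1, Or.inr ⟨u, h2, by simpa [Option.isSome_iff_ne_none] using h3⟩⟩

theorem Safe.cwins {k : ℕ} (n : ℕ) : ∀ (col : Fin 7 → Option (Fin k)) (t : Bool), Safe col →
    (Finset.univ.filter fun u => col u = none).card ≤ n → CMakerWins wG k col t := by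
  induction n with
  | zero =>
    intro col t _ hn
    refine .done _ _ fun v hv => ?_
    have := Finset.card_eq_zero.1 (Nat.le_zero.1 hn)
    have hm : v ∈ Finset.univ.filter fun u => col u = none := by simp [hv]
    rw [this] at hm
    simp at hm
  | succ n ih =>
    intro col t h hn
    by_cases hd : ∀ v, col v ≠ none
    · exact .done _ _ hd
    push Not at hd
    have next : ∀ v c, CLegal wG col v c → ∀ t,
        CMakerWins wG k (Function.update col v (some c)) t := fun v c hc t =>
      ih _ t (h.update c hc.1.1) (by have := free_card_update c hc.1.1; omega)
    obtain ⟨v, hv, hv'⟩ := exists_touch col hd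
    obtain ⟨c, hc⟩ := h.exists_color hv
    cases t with
    | true => exact .maker _ h.not_stuck v c ⟨hc, hv'⟩ (next v c ⟨hc, hv'⟩ _)
    | false => exact .breaker _ h.not_stuck ⟨v, c, hc, hv'⟩ fun v c hc => next v c hc _

/-! ### Soundness of the solver -/

theorem mw_sound_V {k : ℕ} (n : ℕ) : ∀ (t : Bool) (s : List (Fin 7 × Fin k)), Good s →
    mw false (allMoves k) n t s = true → VMakerWins wG k (toCol s) t := by
  induction n with
  | zero => intro t s hs h; exact Safe.vwins _ _ _ (safeB_safe s hs h) le_rfl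
  | succ n ih =>
    intro t s hs h
    by_cases hsafe : safeB s = true
    · exact Safe.vwins _ _ _ (safeB_safe s hs hsafe) le_rfl
    rw [Bool.not_eq_true] at hsafe
    cases t with
    | true =>
      simp only [mw, hsafe, Bool.false_or, Bool.and_eq_true, List.any_eq_true] at h
      obtain ⟨h1, m, -, h2, h3⟩ := h
      refine .maker _ ?_ m.1 m.2 ((legalB_false_iff s hs m).1 h2) (ih _ _ (good_cons hs h2) h3)
      rw [← stuckB_iff s hs]; simpa using h1
    | false =>
      simp only [mw, hsafe, Bool.false_or, Bool.and_eq_true, List.any_eq_true,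
        List.all_eq_true] at h
      obtain ⟨h1, ⟨m, -, h2⟩, h3⟩ := h
      refine .breaker _ ?_ ⟨m.1, ((legalB_false_iff s hs m).1 h2).1⟩ ?_
      · rw [← stuckB_iff s hs]; simpa using h1
      · intro v c hc
        have hl := (legalB_false_iff s hs (v, c)).2 hc
        have := h3 (v, c) (mem_allMoves _)
        rw [hl, Bool.not_true, Bool.false_or] at this
        exact ih true _ (good_cons hs hl) this

theorem mw_sound_C {k : ℕ} (n : ℕ) : ∀ (t : Bool) (s : List (Fin 7 × Fin k)), Good s →
    mw true (allMoves k) n t s = true → CMakerWins wG k (toCol s) t := by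
  induction n with
  | zero => intro t s hs h; exact Safe.cwins _ _ _ (safeB_safe s hs h) le_rfl
  | succ n ih =>
    intro t s hs h
    by_cases hsafe : safeB s = true
    · exact Safe.cwins _ _ _ (safeB_safe s hs hsafe) le_rfl
    rw [Bool.not_eq_true] at hsafe
    cases t with
    | true =>
      simp only [mw, hsafe, Bool.false_or, Bool.and_eq_true, List.any_eq_true] at h
      obtain ⟨h1, m, -, h2, h3⟩ := h
      refine .maker _ ?_ m.1 m.2 ((legalB_true_iff s hs m).1 h2) (ih _ _ (good_cons hs h2) h3)
      rw [← stuckB_iff s hs]; simpa using h1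
    | false =>
      simp only [mw, hsafe, Bool.false_or, Bool.and_eq_true, List.any_eq_true,
        List.all_eq_true] at h
      obtain ⟨h1, ⟨m, -, h2⟩, h3⟩ := h
      refine .breaker _ ?_ ⟨m.1, m.2, (legalB_true_iff s hs m).1 h2⟩ ?_
      · rw [← stuckB_iff s hs]; simpa using h1
      · intro v c hc
        have hl := (legalB_true_iff s hs (v, c)).2 hc
        have := h3 (v, c) (mem_allMoves _)
        rw [hl, Bool.not_true, Bool.false_or] at this
        exact ih true _ (good_cons hs hl) this

theorem stuck_not_V {k : ℕ} {col : Fin 7 → Option (Fin k)} {t : Bool} (h : VStuck wG col) :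
    ¬ VMakerWins wG k col t := by
  intro hw
  cases hw with
  | done _ _ hd => obtain ⟨v, hv, -⟩ := h; exact hd v hv
  | maker _ hns => exact hns h
  | breaker _ hns => exact hns h

theorem stuck_not_C {k : ℕ} {col : Fin 7 → Option (Fin k)} {t : Bool} (h : VStuck wG col) :
    ¬ CMakerWins wG k col t := by
  intro hw
  cases hw with
  | done _ _ hd => obtain ⟨v, hv, -⟩ := h; exact hd v hv
  | maker _ hns => exact hns h
  | breaker _ hns => exact hns h

theorem bw_sound_V {k : ℕ} (bs : List (Fin 7 × Fin k)) (n : ℕ) : ∀ (t : Bool) (s : List (Fin 7 × Fin k)), Good s →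
    bw false (allMoves k) bs n t s = true → ¬ VMakerWins wG k (toCol s) t := by
  induction n with
  | zero => intro t s hs h; exact stuck_not_V ((stuckB_iff s hs).1 h)
  | succ n ih =>
    intro t s hs h
    by_cases hst : stuckB s = true
    · exact stuck_not_V ((stuckB_iff s hs).1 hst)
    rw [Bool.not_eq_true] at hst
    cases t with
    | true =>
      simp only [bw, hst, Bool.false_or, Bool.and_eq_true, List.any_eq_true,
        List.all_eq_true] at h
      obtain ⟨⟨w, -, hwf⟩, h3⟩ := h
      intro hw
      cases hw with
      | done _ _ hd => exact hd w ((isFree_iff s w).1 hwf)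
      | maker _ hns v c hc hih =>
        have hl := (legalB_false_iff s hs (v, c)).2 hc
        have := h3 (v, c) (mem_allMoves _)
        rw [hl, Bool.not_true, Bool.false_or] at this
        exact ih false _ (good_cons hs hl) this hih
    | false =>
      simp only [bw, hst, Bool.false_or, Bool.and_eq_true, List.any_eq_true] at h
      obtain ⟨m, -, h2, h3⟩ := h
      have hl := (legalB_false_iff s hs m).1 h2
      intro hw
      cases hw with
      | done _ _ hd => exact hd m.1 hl.1
      | breaker _ hns hne hih => exact ih true _ (good_cons hs h2) h3 (hih m.1 m.2 hl)

theorem bw_sound_C {k : ℕ} (bs : List (Fin 7 × Fin k)) (n : ℕ) : ∀ (t : Bool) (s : List (Fin 7 × Fin k)), Good s →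
    bw true (allMoves k) bs n t s = true → ¬ CMakerWins wG k (toCol s) t := by
  induction n with
  | zero => intro t s hs h; exact stuck_not_C ((stuckB_iff s hs).1 h)
  | succ n ih =>
    intro t s hs h
    by_cases hst : stuckB s = true
    · exact stuck_not_C ((stuckB_iff s hs).1 hst)
    rw [Bool.not_eq_true] at hst
    cases t with
    | true =>
      simp only [bw, hst, Bool.false_or, Bool.and_eq_true, List.any_eq_true,
        List.all_eq_true] at h
      obtain ⟨⟨w, -, hwf⟩, h3⟩ := h
      intro hw
      cases hw with
      | done _ _ hd => exact hd w ((isFree_iff s w).1 hwf)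
      | maker _ hns v c hc hih =>
        have hl := (legalB_true_iff s hs (v, c)).2 hc
        have := h3 (v, c) (mem_allMoves _)
        rw [hl, Bool.not_true, Bool.false_or] at this
        exact ih false _ (good_cons hs hl) this hih
    | false =>
      simp only [bw, hst, Bool.false_or, Bool.and_eq_true, List.any_eq_true] at h
      obtain ⟨m, -, h2, h3⟩ := h
      have hl := (legalB_true_iff s hs m).1 h2
      intro hw
      cases hw with
      | done _ _ hd => exact hd m.1 hl.1.1
      | breaker _ hns hne hih => exact ih true _ (good_cons hs h2) h3 (hih m.1 m.2 hl)

/-! ### Running the solver -/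

/-- The moves Breaker needs to win the connected game with four colours. -/
def breakerMoves : List (Fin 7 × Fin 4) :=
  [(3, 2), (1, 0), (1, 3), (5, 1), (5, 3), (4, 2), (2, 1), (3, 1), (2, 3), (6, 0), (6, 3),
    (0, 2), (2, 2), (3, 3), (4, 1), (6, 2)]

theorem v0 : bw false (allMoves 0) (allMoves 0) 0 true [] = true := by decide +kernel
theorem v1 : bw false (allMoves 1) (allMoves 1) 2 true [] = true := by decide +kernel
theorem v2 : bw false (allMoves 2) (allMoves 2) 2 true [] = true := by decide +kernel
theorem v3 : bw false (allMoves 3) (allMoves 3) 4 true [] = true := by decide +kernel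
theorem v4 : mw false (allMoves 4) 5 true [] = true := by decide +kernel
theorem c1 : bw true (allMoves 1) (allMoves 1) 2 true [] = true := by decide +kernel
theorem c0 : bw true (allMoves 0) (allMoves 0) 0 true [] = true := by decide +kernel
theorem c2 : bw true (allMoves 2) (allMoves 2) 2 true [] = true := by decide +kernel
theorem c3 : bw true (allMoves 3) (allMoves 3) 4 true [] = true := by decide +kernel
theorem c4 : bw true (allMoves 4) breakerMoves 6 true [] = true := by decide +kernel
theorem c5 : mw true (allMoves 5) 3 true [] = true := by decide +kernel

theorem sInf_eq_of {S : Set ℕ} {n : ℕ} (h : n ∈ S) (h' : ∀ k < n, k ∉ S) : sInf S = n :=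
  le_antisymm (Nat.sInf_le h) (le_csInf ⟨n, h⟩ fun k hk => not_lt.1 fun hlt => h' k hlt hk)

theorem wG_game : gameChromaticNumber wG = 4 := by
  refine sInf_eq_of (mw_sound_V 5 true [] trivial v4) fun k hk => ?_
  interval_cases k
  · exact bw_sound_V _ 0 true [] trivial v0
  · exact bw_sound_V _ 2 true [] trivial v1
  · exact bw_sound_V _ 2 true [] trivial v2
  · exact bw_sound_V _ 4 true [] trivial v3

theorem wG_conn : connGameChromaticNumber wG = 5 := by
  refine sInf_eq_of (mw_sound_C 3 true [] trivial c5) fun k hk => ?_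
  interval_cases k
  · exact bw_sound_C _ 0 true [] trivial c0
  · exact bw_sound_C _ 2 true [] trivial c1
  · exact bw_sound_C _ 2 true [] trivial c2
  · exact bw_sound_C _ 4 true [] trivial c3
  · exact bw_sound_C _ 6 true [] trivial c4

/-- There is a graph `G` on 7 vertices with game chromatic number
`χ_g(G) = 4` and connected game chromatic number `χ_cg(G) = 5`; in particular the
connected game chromatic number can strictly exceed the game chromatic number. -/
theorem exists_graph_chromatic_lt_connected :
    ∃ G : SimpleGraph (Fin 7),
      gameChromaticNumber G = 4 ∧ connGameChromaticNumber G = 5 ∧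
      gameChromaticNumber G < connGameChromaticNumber G := by
  exact ⟨wG, wG_game, wG_conn, by rw [wG_game, wG_conn]; norm_num⟩
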